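/- arXiv:1103.3819 — 4 statements merged into one kernel-verified Lean document; each statement's English description precedes it below -/
import Mathlib

section
/- Let F be a finite field with q elements and n ≥ 0. Then |{(X, Y, Z) ∈ M_n(F)³ : Tr(X(YZ − ZY)) = 0}| − |{(X, Y, Z) ∈ M_n(F)³ : Tr(X(YZ − ZY)) = 1}| = q^{n²} · |{(Y, Z) ∈ M_n(F)² : YZ = ZY}|. (Dimensional reduction for the quiver with one vertex and three loops x, y, z with superpotential W = x(yz − zy), whose reduced space is the commuting variety; this quiver models the Hilbert scheme of ℂ³.) -/
/-!
For fixed `Y, Z` the map `X ↦ Tr(X(YZ - ZY))` is a linear functional, and the trace pairing is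
nondegenerate, so this functional vanishes exactly when `Y` and `Z` commute. A nonzero functional
has equally large fibres over `0` and `1`, which cancel; the zero functional has everything over
`0` and nothing over `1`, so every commuting pair contributes the number of all `X`.
-/

theorem natCard_prod_subtype_eq_sum {α β : Type*} [Finite α] [Fintype β] (p : α → β → Prop) :
    Nat.card {x : α × β // p x.1 x.2} = ∑ b, Nat.card {a // p a b} := by
  rw [← Nat.card_sigma]
  exact Nat.card_congr <|
    ((Equiv.prodComm α β).subtypeEquiv fun _ => Iff.rfl).trans
      (Equiv.subtypeProdEquivSigmaSubtype fun b a => p a b)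

theorem natCard_matrix {α m n : Type*} [Finite m] [Finite n] :
    Nat.card (Matrix m n α) = Nat.card α ^ (Nat.card m * Nat.card n) := by
  rw [Nat.card_congr Matrix.of.symm, Nat.card_fun, Nat.card_fun, ← pow_mul, mul_comm]

section LinearFunctional

variable {K V S : Type*} [DivisionRing K] [AddCommGroup V] [Module K V]

theorem natCard_fiber_eq_of_ne_zero {f : V →ₗ[K] K} (hf : f ≠ 0) (a b : K) :
    Nat.card {v // f v = a} = Nat.card {v // f v = b} :=
  Nat.card_congr
    (AddMonoidHom.fiberEquivOfSurjective (f := f.toAddMonoidHom) (f.surjective hf) a b)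

theorem natCard_fiber_zero_sub_natCard_fiber_one (f : V →ₗ[K] K) [Decidable (f = 0)] :
    (Nat.card {v // f v = 0} : ℤ) - Nat.card {v // f v = 1}
      = if f = 0 then (Nat.card V : ℤ) else 0 := by
  split_ifs with hf
  · simp [hf]
  · rw [natCard_fiber_eq_of_ne_zero hf 0 1, sub_self]

theorem natCard_family_fiber_zero_sub_natCard_family_fiber_one [Finite V] [Finite S]
    (φ : S → V →ₗ[K] K) :
    (Nat.card {x : V × S // φ x.2 x.1 = 0} : ℤ) - Nat.card {x : V × S // φ x.2 x.1 = 1}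
      = Nat.card V * Nat.card {s // φ s = 0} := by
  classical
  have := Fintype.ofFinite S
  calc (Nat.card {x : V × S // φ x.2 x.1 = 0} : ℤ) - Nat.card {x : V × S // φ x.2 x.1 = 1}
      = ∑ s, ((Nat.card {v // φ s v = 0} : ℤ) - Nat.card {v // φ s v = 1}) := by
        rw [natCard_prod_subtype_eq_sum fun v s => φ s v = 0,
          natCard_prod_subtype_eq_sum fun v s => φ s v = 1, Finset.sum_sub_distrib,
          Nat.cast_sum, Nat.cast_sum]
    _ = ∑ s, if φ s = 0 then (Nat.card V : ℤ) else 0 := by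
        simp only [natCard_fiber_zero_sub_natCard_fiber_one]
    _ = Nat.card V * Nat.card {s // φ s = 0} := by
        rw [← Finset.sum_filter, Finset.sum_const, nsmul_eq_mul, mul_comm,
          Nat.card_eq_fintype_card (α := {s // φ s = 0}), Fintype.card_subtype]

end LinearFunctional

section TracePairing

variable {K m n S : Type*} [Fintype m] [Fintype n]

/-- The linear functional `X ↦ Tr(X C)` on matrices, i.e. the trace pairing with `C`. -/
def traceMulRight [Semiring K] (C : Matrix n m K) : Matrix m n K →ₗ[K] K :=
  Matrix.traceLinearMap m K K ∘ₗ mulRightLinearMap m K C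

theorem traceMulRight_apply [Semiring K] (C : Matrix n m K) (X : Matrix m n K) :
    traceMulRight C X = (X * C).trace :=
  rfl

theorem traceMulRight_eq_zero_iff [Semiring K] {C : Matrix n m K} :
    traceMulRight C = 0 ↔ C = 0 := by
  simp [Matrix.ext_iff_trace_mul_left, LinearMap.ext_iff, traceMulRight_apply]

theorem natCard_trace_mul_eq_zero_sub_natCard_trace_mul_eq_one [DivisionRing K] [Finite K]
    [Finite S] (R : S → Matrix n m K) :
    (Nat.card {x : Matrix m n K × S // (x.1 * R x.2).trace = 0} : ℤ)
        - Nat.card {x : Matrix m n K × S // (x.1 * R x.2).trace = 1}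
      = Nat.card K ^ (Nat.card m * Nat.card n) * Nat.card {s // R s = 0} := by
  simpa only [traceMulRight_apply, traceMulRight_eq_zero_iff, natCard_matrix, Nat.cast_pow] using
    natCard_family_fiber_zero_sub_natCard_family_fiber_one fun s => traceMulRight (R s)

end TracePairing

/-- Dimensional reduction for the quiver with one vertex and three
loops `x, y, z` and superpotential `W = x(yz - zy)`:
`|{Tr(X(YZ-ZY)) = 0}| - |{Tr(X(YZ-ZY)) = 1}| = q^(n²) · |{(Y,Z) : YZ = ZY}|`. -/
theorem hilb_C3_dimensional_reduction {F : Type*} [Field F] [Fintype F] (n : ℕ) :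
    (Nat.card {p : Matrix (Fin n) (Fin n) F × Matrix (Fin n) (Fin n) F ×
        Matrix (Fin n) (Fin n) F //
        (p.1 * (p.2.1 * p.2.2 - p.2.2 * p.2.1)).trace = 0} : ℤ)
      - Nat.card {p : Matrix (Fin n) (Fin n) F × Matrix (Fin n) (Fin n) F ×
        Matrix (Fin n) (Fin n) F //
        (p.1 * (p.2.1 * p.2.2 - p.2.2 * p.2.1)).trace = 1}
      = (Fintype.card F) ^ (n ^ 2)
        * Nat.card {p : Matrix (Fin n) (Fin n) F × Matrix (Fin n) (Fin n) F //
            p.1 * p.2 = p.2 * p.1} := by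
  simpa only [sub_eq_zero, Nat.card_eq_fintype_card (α := F), Nat.card_fin, ← sq] using
    natCard_trace_mul_eq_zero_sub_natCard_trace_mul_eq_one
      fun p : Matrix (Fin n) (Fin n) F × Matrix (Fin n) (Fin n) F => p.1 * p.2 - p.2 * p.1
end

section
/- Let k be a field, I a type of vertices, and V_i a k-vector space for each i ∈ I. Let A be a type of arrows with source and target maps s, t : A → I and linear maps M_a : V_{s(a)} → V_{t(a)}, and let there be framing vectors m_l ∈ V_{c(l)} indexed by l ∈ L with c : L → I. Assume the framing vectors generate the representation: every family of subspaces (U_i ⊆ V_i)_{i∈I} satisfying m_l ∈ U_{c(l)} for all l and M_a(U_{s(a)}) ⊆ U_{t(a)} for all a must have U_i = V_i for every i. Then any family of linear automorphisms g_i : V_i → V_i satisfying g_{t(a)} ∘ M_a = M_a ∘ g_{s(a)} for all arrows a and g_{c(l)}(m_l) = m_l for all l must satisfy g_i = id_{V_i} for every i. (Freeness of the GL(v)-action on the stable locus U^Q(v, f) of framed quiver representations.) -/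
theorem eqLocus_le_comap_eqLocus {R V V' W W' : Type*} [Semiring R]
    [AddCommMonoid V] [AddCommMonoid V'] [AddCommMonoid W] [AddCommMonoid W']
    [Module R V] [Module R V'] [Module R W] [Module R W']
    {f : V →ₗ[R] V'} {h : W →ₗ[R] W'} {φ ψ : V →ₗ[R] W} {φ' ψ' : V' →ₗ[R] W'}
    (hφ : φ' ∘ₗ f = h ∘ₗ φ) (hψ : ψ' ∘ₗ f = h ∘ₗ ψ) :
    LinearMap.eqLocus φ ψ ≤ (LinearMap.eqLocus φ' ψ').comap f := by
  intro x hx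
  rw [LinearMap.mem_eqLocus] at hx
  rw [Submodule.mem_comap, LinearMap.mem_eqLocus]
  calc φ' (f x) = h (φ x) := LinearMap.congr_fun hφ x
    _ = h (ψ x) := congrArg h hx
    _ = ψ' (f x) := (LinearMap.congr_fun hψ x).symm

theorem stable_framed_rep_free_action_general
    {R : Type*} [Semiring R] {I : Type*} {V W : I → Type*}
    [∀ i, AddCommMonoid (V i)] [∀ i, Module R (V i)]
    [∀ i, AddCommMonoid (W i)] [∀ i, Module R (W i)]
    {A : Type*} {s t : A → I} {M : ∀ a, V (s a) →ₗ[R] V (t a)} {N : ∀ a, W (s a) →ₗ[R] W (t a)}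
    {L : Type*} {c : L → I} {m : ∀ l, V (c l)}
    (hgen : ∀ U : ∀ i, Submodule R (V i),
      (∀ l, m l ∈ U (c l)) → (∀ a, ∀ x ∈ U (s a), M a x ∈ U (t a)) → ∀ i, U i = ⊤)
    {φ ψ : ∀ i, V i →ₗ[R] W i}
    (hφ : ∀ a, φ (t a) ∘ₗ M a = N a ∘ₗ φ (s a)) (hψ : ∀ a, ψ (t a) ∘ₗ M a = N a ∘ₗ ψ (s a))
    (hframing : ∀ l, φ (c l) (m l) = ψ (c l) (m l)) (i : I) :
    φ i = ψ i :=
  -- The equalizer of `φ` and `ψ` is a subrepresentation containing the framing vectors.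
  LinearMap.eqLocus_eq_top.mp <| hgen (fun i => LinearMap.eqLocus (φ i) (ψ i)) hframing
    (fun a _ hx => eqLocus_le_comap_eqLocus (hφ a) (hψ a) hx) i

/-- Freeness of the `GL(v)`-action on the stable locus of framed
quiver representations: if the framing vectors generate the representation,
then any family of linear automorphisms commuting with all arrow maps and
fixing all framing vectors is the identity. -/
theorem stable_framed_rep_free_action
    {k : Type*} [Field k] {I : Type*} {V : I → Type*}
    [∀ i, AddCommGroup (V i)] [∀ i, Module k (V i)]
    {A : Type*} (s t : A → I) (M : ∀ a : A, V (s a) →ₗ[k] V (t a))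
    {L : Type*} (c : L → I) (m : ∀ l : L, V (c l))
    (hgen : ∀ U : ∀ i, Submodule k (V i),
      (∀ l, m l ∈ U (c l)) →
      (∀ a : A, ∀ x ∈ U (s a), M a x ∈ U (t a)) →
      ∀ i, U i = ⊤)
    (g : ∀ i, V i ≃ₗ[k] V i)
    (hcomm : ∀ (a : A) (x : V (s a)), g (t a) (M a x) = M a (g (s a) x))
    (hfix : ∀ l, g (c l) (m l) = m l) :
    ∀ (i : I) (x : V i), g i x = x := fun i =>
  LinearMap.congr_fun <| stable_framed_rep_free_action_general hgen
    (φ := fun i => (g i).toLinearMap) (ψ := fun _ => LinearMap.id)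
    (fun a => LinearMap.ext (hcomm a)) (fun _ => rfl) hfix i
end

section
/- Let F be a finite field with q elements and 0 ≤ w ≤ n. For a triple of n × n matrices (X, Y, Z) over F and a vector m ∈ F^n, let S(X, Y, Z, m) denote the smallest linear subspace of F^n containing m and invariant under X, Y and Z. Let u(w) = |{(X', Y', Z', m') : X', Y', Z' ∈ M_w(F), m' ∈ F^w, S(X', Y', Z', m') = F^w}| and let G(w, n) be the number of w-dimensional subspaces of F^n. Then |{(X, Y, Z, m) ∈ M_n(F)³ × F^n : dim S(X, Y, Z, m) = w}| = G(w, n) · q^{3w(n−w) + 3(n−w)²} · u(w). (This is the point-count form of the stratification of framed representations by the dimension of the subspace generated by the framing vector, a Zariski fibration over the Grassmannian.) -/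
/-- The smallest subspace of `F^n` containing `m` and invariant under the
three matrices `X`, `Y`, `Z` (the span `ℂ⟨X,Y,Z⟩{m}`). -/
def genSpan {F : Type*} [Field F] {n : ℕ}
    (X Y Z : Matrix (Fin n) (Fin n) F) (m : Fin n → F) :
    Submodule F (Fin n → F) :=
  sInf {U : Submodule F (Fin n → F) | m ∈ U ∧
    (∀ v ∈ U, X.mulVec v ∈ U) ∧ (∀ v ∈ U, Y.mulVec v ∈ U) ∧
    (∀ v ∈ U, Z.mulVec v ∈ U)}

/-!
Fix a subspace `S` of dimension `w` and coordinates `V ≃ W × D` in which `S` becomes `W × 0`. An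
endomorphism preserving `S` is then an arbitrary endomorphism of `W` together with an arbitrary
linear map `D → V`, its second block column. The framed tuples generating exactly `S` are those
preserving `S`, with framing vectors in `S`, whose restriction to `W` generates `W`; the second
block columns do not matter. Every fibre of the map sending a tuple to the subspace it generates is
therefore the product of the space of second block columns with the set of stable tuples on `W`.
-/

open Module

section InvariantSpan

variable {R M N ι κ : Type*} [Semiring R] [AddCommMonoid M] [Module R M]
  [AddCommMonoid N] [Module R N]

/-- The subrepresentation generated by the framing vectors `v`: the smallest submodule containing
every `v j` and invariant under every `f i`. It is `genSpan` for any number of loops and framing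
vectors, with endomorphisms in place of matrices. -/
def invariantSpan (f : ι → End R M) (v : κ → M) : Submodule R M :=
  sInf {U | (∀ j, v j ∈ U) ∧ ∀ i, U ∈ (f i).invtSubmodule}

theorem mem_invariantSpan (f : ι → End R M) (v : κ → M) (j : κ) : v j ∈ invariantSpan f v :=
  Submodule.mem_sInf.2 fun _ hU => hU.1 j

theorem invariantSpan_mem_invtSubmodule (f : ι → End R M) (v : κ → M) (i : ι) :
    invariantSpan f v ∈ (f i).invtSubmodule :=
  fun _ hx => Submodule.mem_sInf.2 fun U hU => hU.2 i (Submodule.mem_sInf.1 hx U hU)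

theorem invariantSpan_le {f : ι → End R M} {v : κ → M} {U : Submodule R M}
    (hv : ∀ j, v j ∈ U) (hf : ∀ i, U ∈ (f i).invtSubmodule) : invariantSpan f v ≤ U :=
  sInf_le ⟨hv, hf⟩

theorem invariantSpan_comp_eq_map {f : ι → End R M} {g : ι → End R N} {φ : M →ₗ[R] N}
    (hφ : ∀ i x, g i (φ x) = φ (f i x)) (v : κ → M) :
    invariantSpan g (φ ∘ v) = (invariantSpan f v).map φ := by
  apply le_antisymm
  · refine invariantSpan_le (fun j => ⟨v j, mem_invariantSpan f v j, rfl⟩) fun i => ?_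
    rintro _ ⟨x, hx, rfl⟩
    exact ⟨f i x, invariantSpan_mem_invtSubmodule f v i hx, (hφ i x).symm⟩
  · rw [Submodule.map_le_iff_le_comap]
    refine invariantSpan_le (mem_invariantSpan g (φ ∘ v)) fun i x hx => ?_
    rw [Submodule.mem_comap, Submodule.mem_comap, ← hφ]
    exact invariantSpan_mem_invtSubmodule g (φ ∘ v) i hx

theorem invariantSpan_comp_eq_range_iff {f : ι → End R M} {g : ι → End R N} {φ : M →ₗ[R] N}
    (hφ : ∀ i x, g i (φ x) = φ (f i x)) (hinj : Function.Injective φ) (v : κ → M) :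
    invariantSpan g (φ ∘ v) = LinearMap.range φ ↔ invariantSpan f v = ⊤ := by
  rw [invariantSpan_comp_eq_map hφ, LinearMap.range_eq_map,
    (Submodule.map_injective_of_injective hinj).eq_iff]

end InvariantSpan

section BlockDecomposition

variable {R V W D ι κ : Type*} [Semiring R] [AddCommMonoid V] [Module R V]
  [AddCommMonoid W] [Module R W] [AddCommMonoid D] [Module R D] (e : (W × D) ≃ₗ[R] V)

/-- The inclusion of the first summand of a decomposition `e : W × D ≃ V`. -/
def leftInclusion : W →ₗ[R] V :=
  e.toLinearMap ∘ₗ LinearMap.inl R W D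

/-- The endomorphism of `V ≃ W × D` whose first block column is `g` on top of `0` and whose second
block column is `h`, that is, a block upper-triangular matrix. The two blocks of the second column
are kept together as a single map into `V`. -/
def blockTriangular (g : End R W) (h : D →ₗ[R] V) : End R V :=
  (leftInclusion e ∘ₗ g).coprod h ∘ₗ e.symm.toLinearMap

theorem leftInclusion_apply (x : W) : leftInclusion e x = e (x, 0) :=
  rfl

theorem leftInclusion_injective : Function.Injective (leftInclusion e) :=
  e.injective.comp LinearMap.inl_injective

theorem blockTriangular_leftInclusion (g : End R W) (h : D →ₗ[R] V) (x : W) :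
    blockTriangular e g h (leftInclusion e x) = leftInclusion e (g x) := by
  simp [blockTriangular, leftInclusion_apply]

theorem blockTriangular_apply_inr (g : End R W) (h : D →ₗ[R] V) (y : D) :
    blockTriangular e g h (e (0, y)) = h y := by
  simp [blockTriangular]

theorem blockTriangular_inj {g g' : End R W} {h h' : D →ₗ[R] V} :
    blockTriangular e g h = blockTriangular e g' h' ↔ g = g' ∧ h = h' := by
  refine ⟨fun heq => ⟨LinearMap.ext fun x => ?_, LinearMap.ext fun y => ?_⟩,
    fun ⟨hg, hh⟩ => hg ▸ hh ▸ rfl⟩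
  · apply leftInclusion_injective e
    rw [← blockTriangular_leftInclusion e g h, heq, blockTriangular_leftInclusion]
  · rw [← blockTriangular_apply_inr e g h, heq, blockTriangular_apply_inr]

theorem exists_blockTriangular_eq {f : End R V}
    (hf : LinearMap.range (leftInclusion e) ∈ f.invtSubmodule) :
    ∃ g h, blockTriangular e g h = f := by
  let g : End R W := LinearMap.fst R W D ∘ₗ e.symm.toLinearMap ∘ₗ f ∘ₗ leftInclusion e
  have leftInclusion_comp : leftInclusion e ∘ₗ g = f ∘ₗ leftInclusion e := by
    ext x
    obtain ⟨y, hy⟩ : f (leftInclusion e x) ∈ LinearMap.range (leftInclusion e) := hf ⟨x, rfl⟩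
    simp only [g, LinearMap.comp_apply, ← hy]
    simp [leftInclusion_apply]
  refine ⟨g, f ∘ₗ e.toLinearMap ∘ₗ LinearMap.inr R W D, ?_⟩
  rw [blockTriangular, leftInclusion_comp, leftInclusion, ← LinearMap.comp_coprod,
    ← LinearMap.comp_coprod, LinearMap.coprod_inl_inr]
  ext x
  simp

/-- The framed tuple on `V ≃ W × D` with diagonal blocks and framing vectors given by a framed tuple
on `W`, and with second block columns `h`. -/
def extendTuple (h : ι → D →ₗ[R] V) (p : (ι → End R W) × (κ → W)) : (ι → End R V) × (κ → V) :=
  (fun i => blockTriangular e (p.1 i) (h i), leftInclusion e ∘ p.2)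

theorem invariantSpan_extendTuple_eq_range_iff (h : ι → D →ₗ[R] V)
    (p : (ι → End R W) × (κ → W)) :
    invariantSpan (extendTuple e h p).1 (extendTuple e h p).2 = LinearMap.range (leftInclusion e) ↔
      invariantSpan p.1 p.2 = ⊤ :=
  invariantSpan_comp_eq_range_iff (fun i => blockTriangular_leftInclusion e (p.1 i) (h i))
    (leftInclusion_injective e) p.2

theorem extendTuple_inj {h h' : ι → D →ₗ[R] V} {p p' : (ι → End R W) × (κ → W)} :
    extendTuple e h p = extendTuple e h' p' ↔ h = h' ∧ p = p' := by
  simp only [extendTuple, Prod.ext_iff, funext_iff, blockTriangular_inj, Function.comp_apply,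
    (leftInclusion_injective e).eq_iff]
  grind

theorem exists_extendTuple_eq {p : (ι → End R V) × (κ → V)}
    (hp : invariantSpan p.1 p.2 = LinearMap.range (leftInclusion e)) :
    ∃ h p', extendTuple e h p' = p := by
  choose g h hgh using fun i =>
    exists_blockTriangular_eq e (hp ▸ invariantSpan_mem_invtSubmodule p.1 p.2 i)
  choose x hx using fun j => hp ▸ mem_invariantSpan p.1 p.2 j
  exact ⟨h, (g, x), Prod.ext (funext hgh) (funext hx)⟩

/-- The framed tuples generating exactly the summand `W` of `V ≃ W × D` are the stable framed tuples
on `W` together with arbitrary second block columns. -/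
noncomputable def fibreEquiv :
    {p : (ι → End R V) × (κ → V) // invariantSpan p.1 p.2 = LinearMap.range (leftInclusion e)} ≃
      (ι → D →ₗ[R] V) × {p : (ι → End R W) × (κ → W) // invariantSpan p.1 p.2 = ⊤} :=
  .symm <| .ofBijective
    (fun x => ⟨extendTuple e x.1 x.2, (invariantSpan_extendTuple_eq_range_iff e _ _).2 x.2.2⟩) <| by
    constructor
    · intro x y hxy
      obtain ⟨hh, hp⟩ := (extendTuple_inj e).1 (Subtype.ext_iff.1 hxy)
      exact Prod.ext hh (Subtype.ext hp)
    · rintro ⟨p, hp⟩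
      obtain ⟨h, p', rfl⟩ := exists_extendTuple_eq e hp
      exact ⟨(h, ⟨p', (invariantSpan_extendTuple_eq_range_iff e h p').1 hp⟩), rfl⟩

end BlockDecomposition

section Stratification

variable {K V ι κ : Type*} [Field K] [AddCommGroup V] [Module K V] [FiniteDimensional K V]

theorem exists_range_leftInclusion_eq {S : Submodule K V} {w : ℕ} (hS : finrank K S = w) :
    ∃ e : ((Fin w → K) × (Fin (finrank K V - w) → K)) ≃ₗ[K] V,
      LinearMap.range (leftInclusion e) = S := by
  obtain ⟨C, hSC⟩ := S.exists_isCompl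
  have hC : finrank K C = finrank K V - w := by
    have := Submodule.finrank_add_eq_of_isCompl hSC
    omega
  let eS : (Fin w → K) ≃ₗ[K] S := LinearEquiv.ofFinrankEq _ _ (by simp [hS])
  let eC : (Fin (finrank K V - w) → K) ≃ₗ[K] C := LinearEquiv.ofFinrankEq _ _ (by simp [hC])
  let e := (eS.prodCongr eC).trans (S.prodEquivOfIsCompl C hSC)
  have leftInclusion_eq : leftInclusion e = S.subtype ∘ₗ eS.toLinearMap := by
    ext x
    simp [e, leftInclusion_apply]
  exact ⟨e, by rw [leftInclusion_eq, LinearEquiv.range_comp, Submodule.range_subtype]⟩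

/-- The framed tuples generating a given `w`-dimensional subspace, modelled on `K^w` through an
arbitrary choice of coordinates adapted to the subspace. -/
noncomputable def fibreEquivOfFinrankEq {S : Submodule K V} {w : ℕ} (hS : finrank K S = w) :
    {p : (ι → End K V) × (κ → V) // invariantSpan p.1 p.2 = S} ≃
      (ι → (Fin (finrank K V - w) → K) →ₗ[K] V) ×
        {p : (ι → End K (Fin w → K)) × (κ → Fin w → K) // invariantSpan p.1 p.2 = ⊤} :=
  (Equiv.subtypeEquivRight fun p => by
    rw [(exists_range_leftInclusion_eq hS).choose_spec]).trans
  (fibreEquiv (exists_range_leftInclusion_eq hS).choose)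

/-- The stratum of framed tuples on `V` generating a `w`-dimensional subspace, as the product of the
Grassmannian, the second block columns and the stable framed tuples on `K^w`. As a bijection of
sets this is a global product, since the coordinates are chosen separately for each subspace. -/
noncomputable def stratumEquiv (w : ℕ) :
    {p : (ι → End K V) × (κ → V) // finrank K (invariantSpan p.1 p.2) = w} ≃
      {S : Submodule K V // finrank K S = w} × (ι → (Fin (finrank K V - w) → K) →ₗ[K] V) ×
        {p : (ι → End K (Fin w → K)) × (κ → Fin w → K) // invariantSpan p.1 p.2 = ⊤} :=
  calc
    _ ≃ Σ S : {S : Submodule K V // finrank K S = w},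
          {p : (ι → End K V) × (κ → V) // invariantSpan p.1 p.2 = S} :=
      (Equiv.sigmaSubtypeFiberEquivSubtype
        (fun p : (ι → End K V) × (κ → V) => invariantSpan p.1 p.2) fun _ => Iff.rfl).symm
    _ ≃ _ := Equiv.sigmaCongrRight fun S => fibreEquivOfFinrankEq S.2
    _ ≃ _ := Equiv.sigmaEquivProd _ _

theorem framed_stratum_pointcount_general [Fintype K] (k r w : ℕ) :
    Nat.card {p : (Fin k → End K V) × (Fin r → V) // finrank K (invariantSpan p.1 p.2) = w} =
      Nat.card {S : Submodule K V // finrank K S = w}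
        * Fintype.card K ^ (k * (w * (finrank K V - w) + (finrank K V - w) ^ 2))
        * Nat.card {p : (Fin k → End K (Fin w → K)) × (Fin r → Fin w → K) //
            invariantSpan p.1 p.2 = ⊤} := by
  have card_columns : Nat.card (Fin k → (Fin (finrank K V - w) → K) →ₗ[K] V) =
      Fintype.card K ^ (k * ((finrank K V - w) * finrank K V)) := by
    rw [Module.natCard_eq_pow_finrank (K := K), Module.finrank_pi_fintype]
    simp [Module.finrank_linearMap]
  have exponent_eq : (finrank K V - w) * finrank K V =
      w * (finrank K V - w) + (finrank K V - w) ^ 2 := by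
    obtain hw | hw := le_total w (finrank K V)
    · obtain ⟨d, hd⟩ := Nat.exists_eq_add_of_le hw
      rw [hd, Nat.add_sub_cancel_left]
      ring
    · simp [Nat.sub_eq_zero_of_le hw]
  rw [Nat.card_congr (stratumEquiv w), Nat.card_prod, Nat.card_prod, card_columns, exponent_eq,
    mul_assoc]

end Stratification

section MatrixTriples

variable {F : Type*} [Field F] {n : ℕ}

theorem genSpan_eq_invariantSpan (X Y Z : Matrix (Fin n) (Fin n) F) (m : Fin n → F) :
    genSpan X Y Z m = invariantSpan ![X.toLin', Y.toLin', Z.toLin'] ![m] := by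
  simp [genSpan, invariantSpan, Fin.forall_fin_succ,
    End.mem_invtSubmodule_iff_forall_mem_of_mem]

/-- Framed triples of matrices as framed tuples of endomorphisms with three loops and one framing
vector. -/
noncomputable def matrixTripleEquiv :
    Matrix (Fin n) (Fin n) F × Matrix (Fin n) (Fin n) F × Matrix (Fin n) (Fin n) F × (Fin n → F) ≃
      (Fin 3 → End F (Fin n → F)) × (Fin 1 → Fin n → F) where
  toFun p := (![p.1.toLin', p.2.1.toLin', p.2.2.1.toLin'], ![p.2.2.2])
  invFun p := (LinearMap.toMatrix' (p.1 0), LinearMap.toMatrix' (p.1 1),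
    LinearMap.toMatrix' (p.1 2), p.2 0)
  left_inv p := by simp
  right_inv p := by
    ext i : 2 <;> fin_cases i <;> simp

theorem natCard_genSpan_eq_natCard_invariantSpan (P : Submodule F (Fin n → F) → Prop) :
    Nat.card {p : Matrix (Fin n) (Fin n) F × Matrix (Fin n) (Fin n) F ×
        Matrix (Fin n) (Fin n) F × (Fin n → F) // P (genSpan p.1 p.2.1 p.2.2.1 p.2.2.2)} =
      Nat.card {p : (Fin 3 → End F (Fin n → F)) × (Fin 1 → Fin n → F) //
        P (invariantSpan p.1 p.2)} :=
  Nat.card_congr <| matrixTripleEquiv.subtypeEquiv fun p => by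
    rw [genSpan_eq_invariantSpan]
    rfl

end MatrixTriples

/-- Stratification of framed representations of the three-loop
quiver by the dimension `w` of the generated subspace: the stratum is a
fibration over the Grassmannian `G(w, n)` with fibre
`q^(3w(n-w) + 3(n-w)²) · u(w)`, where `u(w)` counts stable framed tuples. -/
theorem framed_stratum_pointcount {F : Type*} [Field F] [Fintype F]
    (n w : ℕ) (hw : w ≤ n) :
    Nat.card {p : Matrix (Fin n) (Fin n) F × Matrix (Fin n) (Fin n) F ×
        Matrix (Fin n) (Fin n) F × (Fin n → F) //
        Module.finrank F (genSpan p.1 p.2.1 p.2.2.1 p.2.2.2) = w}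
      = Nat.card {S : Submodule F (Fin n → F) // Module.finrank F S = w}
        * (Fintype.card F) ^ (3 * w * (n - w) + 3 * (n - w) ^ 2)
        * Nat.card {p : Matrix (Fin w) (Fin w) F × Matrix (Fin w) (Fin w) F ×
            Matrix (Fin w) (Fin w) F × (Fin w → F) //
            genSpan p.1 p.2.1 p.2.2.1 p.2.2.2 = ⊤} := by
  rw [natCard_genSpan_eq_natCard_invariantSpan (finrank F · = w),
    natCard_genSpan_eq_natCard_invariantSpan (· = ⊤), framed_stratum_pointcount_general,
    finrank_fin_fun, mul_add, mul_assoc 3 w]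
end

section
/- Let F be a finite field with q elements. For m ≥ 0 let C(m) = |{(Y, Z) ∈ M_m(F)² : YZ = ZY}|, and for w ≥ 0 let y₀(w) (respectively y₁(w)) be the number of tuples (X, Y, Z, m) with X, Y, Z ∈ M_w(F) and m ∈ F^w such that the smallest subspace containing m and invariant under X, Y, Z is all of F^w and Tr(X(YZ − ZY)) = 0 (respectively = 1). Let G(w, n) denote the number of w-dimensional subspaces of F^n. Then for every n ≥ 0, q^{n² + n} · C(n) = Σ_{w = 0}^{n} G(w, n) · q^{3w(n−w) + (n−w)²} · (y₀(w) − y₁(w)) · C(n − w), as an identity of integers. (This is the point-count instance of the reduction theorem R^{Q,W}(𝕃^{f/2} t) = DT^{Q,W}_f(t) ∗ R^{Q,W}(𝕃^{−f/2} t) for the quiver with one vertex, three loops x, y, z, superpotential W = x(yz − zy) and framing f = 1, which models the Hilbert schemes of ℂ³.) -/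
/-- The number of commuting pairs of `m × m` matrices over `F`. -/
noncomputable def commCount (F : Type*) [Field F] [Fintype F] (m : ℕ) : ℕ :=
  Nat.card {p : Matrix (Fin m) (Fin m) F × Matrix (Fin m) (Fin m) F //
    p.1 * p.2 = p.2 * p.1}

/-- The number of stable framed tuples `(X, Y, Z, m)` on `F^w` with
`Tr(X(YZ - ZY)) = c`. -/
noncomputable def stableFibreCount (F : Type*) [Field F] [Fintype F] (w : ℕ) (c : F) : ℕ :=
  Nat.card {p : Matrix (Fin w) (Fin w) F × Matrix (Fin w) (Fin w) F ×
    Matrix (Fin w) (Fin w) F × (Fin w → F) //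
    genSpan p.1 p.2.1 p.2.2.1 p.2.2.2 = ⊤ ∧
    (p.1 * (p.2.1 * p.2.2.1 - p.2.2.1 * p.2.1)).trace = c}

/-- The number `G(w, n)` of `w`-dimensional subspaces of `F^n`. -/
noncomputable def grassCount (F : Type*) [Field F] [Fintype F] (w n : ℕ) : ℕ :=
  Nat.card {S : Submodule F (Fin n → F) // Module.finrank F S = w}

/-!
Weight every framed tuple `r` by `φ (W r)`, where `W` is the trace of a potential and `φ : F → ℤ` is
`1` at `0`, `-1` at `1` and `0` elsewhere; only `∑ φ = 0` and `φ 0 = 1` matter.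

If the potential is `x · P` with `P` not involving `x`, the sum over `X` of `φ (a + Tr (X K))` with
`K` the value of `P` vanishes for `K ≠ 0`, when `X ↦ Tr (X K)` is a surjective functional. So the
total weight counts the solutions of `P = 0`.

On the other hand, sort the framed tuples by the subspace `U` they generate. In a basis adapted to
`U` they are the block upper triangular tuples whose first diagonal block is stable; the
off-diagonal blocks are free and do not change `W`, which is the sum of its values on the two
diagonal blocks. Summing over the second diagonal block is again the computation above.
-/

open scoped Matrix

section TracePairing

theorem card_matrix {F ι κ : Type*} [Fintype F] [Fintype ι] [DecidableEq ι] [Fintype κ]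
    [DecidableEq κ] :
    Fintype.card (Matrix ι κ F) = Fintype.card F ^ (Fintype.card ι * Fintype.card κ) := by
  rw [Fintype.card_congr Matrix.of.symm, Fintype.card_fun, Fintype.card_fun, ← pow_mul, mul_comm]

theorem sum_comp_eq_zero_of_surjective {G H M : Type*} [AddGroup G] [Fintype G] [AddGroup H]
    [Fintype H] [AddCommMonoid M] (f : G →+ H) (hf : Function.Surjective f) {φ : H → M}
    (hφ : ∑ h, φ h = 0) :
    ∑ g, φ (f g) = 0 := by
  classical
  have card_fiber (h : H) : Finset.card {g | f g = h} = Finset.card {g | f g = 0} :=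
    AddMonoidHom.card_fiber_eq_of_mem_range f (hf h) (hf 0)
  rw [Finset.sum_comp, Finset.image_univ_of_surjective hf]
  simp only [card_fiber, ← Finset.smul_sum, hφ, smul_zero]

variable {F κ : Type*} [Field F] [Fintype κ]

theorem surjective_trace_mul {K : Matrix κ κ F} (hK : K ≠ 0) :
    Function.Surjective fun X : Matrix κ κ F ↦ (X * K).trace := by
  classical
  let pairing : Matrix κ κ F →ₗ[F] F := Matrix.traceLinearMap κ F F ∘ₗ LinearMap.mulRight F K
  refine LinearMap.surjective (f := pairing) fun pairing_eq_zero ↦ hK ?_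
  refine Matrix.ext_iff_trace_mul_left.2 fun X ↦ ?_
  simpa [pairing] using LinearMap.congr_fun pairing_eq_zero X

open Classical in
theorem sum_comp_add_trace_mul {R : Type*} [CommSemiring R] [Fintype F] [DecidableEq κ]
    {φ : F → R} (hφ : ∑ c, φ c = 0) (K : Matrix κ κ F) (a : F) :
    ∑ X : Matrix κ κ F, φ (a + (X * K).trace) =
      if K = 0 then (Fintype.card F : R) ^ Fintype.card κ ^ 2 * φ a else 0 := by
  split_ifs with hK
  · simp [hK, card_matrix, sq]
  · have shifted_sum : ∑ c, φ (a + c) = 0 := (Equiv.sum_comp (Equiv.addLeft a) φ).trans hφ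
    let pairing : Matrix κ κ F →+ F :=
      (Matrix.traceAddMonoidHom κ F).comp (AddMonoidHom.mulRight K)
    exact sum_comp_eq_zero_of_surjective pairing (surjective_trace_mul hK) shifted_sum

end TracePairing

/-- Framed representations on `F^ι` of the quiver with one vertex, loops `Λ` and framing `1`: a
matrix for each loop, together with a framing vector. -/
abbrev FramedTuple (Λ F ι : Type*) : Type _ := (Λ → Matrix ι ι F) × (ι → F)

section GeneratedSubspace

variable {Λ F ι κ : Type*} [CommRing F] [Fintype ι] [Fintype κ]

/-- The smallest subspace containing the framing vector and invariant under all loops; this is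
`genSpan` for an arbitrary family of loops. The tuple is stable when this is `⊤`. -/
def generatedSubspace (r : FramedTuple Λ F ι) : Submodule F (ι → F) :=
  sInf {U | r.2 ∈ U ∧ ∀ l, ∀ v ∈ U, r.1 l *ᵥ v ∈ U}

theorem generatedSubspace_le {r : FramedTuple Λ F ι} {U : Submodule F (ι → F)} (hm : r.2 ∈ U)
    (hU : ∀ l, ∀ v ∈ U, r.1 l *ᵥ v ∈ U) : generatedSubspace r ≤ U :=
  sInf_le ⟨hm, hU⟩

theorem framing_mem_generatedSubspace (r : FramedTuple Λ F ι) : r.2 ∈ generatedSubspace r :=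
  Submodule.mem_sInf.2 fun _ hU ↦ hU.1

theorem mulVec_mem_generatedSubspace (r : FramedTuple Λ F ι) (l : Λ) {v : ι → F}
    (hv : v ∈ generatedSubspace r) : r.1 l *ᵥ v ∈ generatedSubspace r :=
  Submodule.mem_sInf.2 fun U hU ↦ hU.2 l v (Submodule.mem_sInf.1 hv U hU)

theorem generatedSubspace_eq_map {r : FramedTuple Λ F ι} {r' : FramedTuple Λ F κ}
    (f : (ι → F) →ₗ[F] (κ → F)) (hm : r'.2 = f r.2)
    (hf : ∀ l v, r'.1 l *ᵥ f v = f (r.1 l *ᵥ v)) :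
    generatedSubspace r' = (generatedSubspace r).map f := by
  apply le_antisymm
  · refine generatedSubspace_le ⟨_, framing_mem_generatedSubspace r, hm.symm⟩ ?_
    rintro l _ ⟨v, hv, rfl⟩
    exact ⟨_, mulVec_mem_generatedSubspace r l hv, (hf l v).symm⟩
  · rw [Submodule.map_le_iff_le_comap]
    refine generatedSubspace_le ?_ fun l v hv ↦ ?_
    · simpa [hm] using framing_mem_generatedSubspace r'
    · simpa [hf] using mulVec_mem_generatedSubspace r' l hv

end GeneratedSubspace

section TracePotential

variable {Λ F ι κ : Type*} [CommRing F] [Fintype ι] [DecidableEq ι] [Fintype κ] [DecidableEq κ]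

/-- The function `Tr W` on representations defined by a potential `W`, a noncommutative polynomial
in the loops. -/
noncomputable def tracePotential (W : FreeAlgebra F Λ) (A : Λ → Matrix ι ι F) : F :=
  (FreeAlgebra.lift F A W).trace

theorem exists_lift_fromBlocks_eq (A : Λ → Matrix ι ι F) (B : Λ → Matrix ι κ F)
    (D : Λ → Matrix κ κ F) (W : FreeAlgebra F Λ) :
    ∃ B' : Matrix ι κ F, FreeAlgebra.lift F (fun l ↦ Matrix.fromBlocks (A l) (B l) 0 (D l)) W =
      Matrix.fromBlocks (FreeAlgebra.lift F A W) B' 0 (FreeAlgebra.lift F D W) := by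
  induction W using FreeAlgebra.induction with
  | grade0 c => exact ⟨0, by simp [Algebra.algebraMap_eq_smul_one, ← Matrix.fromBlocks_one,
      Matrix.fromBlocks_smul]⟩
  | grade1 l => exact ⟨B l, by simp⟩
  | mul V W hV hW =>
    obtain ⟨B₁, hB₁⟩ := hV
    obtain ⟨B₂, hB₂⟩ := hW
    exact ⟨FreeAlgebra.lift F A V * B₂ + B₁ * FreeAlgebra.lift F D W, by
      simp [hB₁, hB₂, Matrix.fromBlocks_multiply]⟩
  | add V W hV hW =>
    obtain ⟨B₁, hB₁⟩ := hV
    obtain ⟨B₂, hB₂⟩ := hW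
    exact ⟨B₁ + B₂, by simp [hB₁, hB₂, Matrix.fromBlocks_add]⟩

theorem tracePotential_fromBlocks (W : FreeAlgebra F Λ) (A : Λ → Matrix ι ι F)
    (B : Λ → Matrix ι κ F) (D : Λ → Matrix κ κ F) :
    tracePotential W (fun l ↦ Matrix.fromBlocks (A l) (B l) 0 (D l)) =
      tracePotential W A + tracePotential W D := by
  obtain ⟨B', hB'⟩ := exists_lift_fromBlocks_eq A B D W
  simp [tracePotential, hB', Matrix.trace, Fintype.sum_sum_type]

end TracePotential

section ChangeOfCoordinates

variable {Λ F ι κ : Type*} [CommRing F] [Fintype ι] [DecidableEq ι] [Fintype κ] [DecidableEq κ]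

/-- Conjugation of matrices by a linear equivalence `F^ι ≃ F^κ`. -/
noncomputable def conjMatrix (e : (ι → F) ≃ₗ[F] (κ → F)) : Matrix ι ι F ≃ₐ[F] Matrix κ κ F :=
  (Matrix.toLinAlgEquiv'.trans (e.conjAlgEquiv F)).trans LinearMap.toMatrixAlgEquiv'

theorem toLin'_conjMatrix (e : (ι → F) ≃ₗ[F] (κ → F)) (A : Matrix ι ι F) :
    Matrix.toLin' (conjMatrix e A) = e.conj (Matrix.toLin' A) :=
  Matrix.toLin'_toMatrix' (e.conj (Matrix.toLin' A))

theorem conjMatrix_mulVec (e : (ι → F) ≃ₗ[F] (κ → F)) (A : Matrix ι ι F) (v : ι → F) :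
    conjMatrix e A *ᵥ e v = e (A *ᵥ v) := by
  rw [← Matrix.toLin'_apply, toLin'_conjMatrix]
  simp [LinearEquiv.conj_apply]

theorem trace_conjMatrix (e : (ι → F) ≃ₗ[F] (κ → F)) (A : Matrix ι ι F) :
    (conjMatrix e A).trace = A.trace := by
  rw [← Matrix.trace_toLin'_eq, toLin'_conjMatrix, LinearMap.trace_conj', Matrix.trace_toLin'_eq]

theorem tracePotential_conjMatrix (W : FreeAlgebra F Λ) (e : (ι → F) ≃ₗ[F] (κ → F))
    (A : Λ → Matrix ι ι F) :
    tracePotential W (fun l ↦ conjMatrix e (A l)) = tracePotential W A := by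
  have lift_conj : FreeAlgebra.lift F (fun l ↦ conjMatrix e (A l)) =
      (conjMatrix e).toAlgHom.comp (FreeAlgebra.lift F A) := by
    ext l : 2
    simp
  rw [tracePotential, lift_conj]
  exact trace_conjMatrix e _

/-- The bijection of framed tuples induced by a linear equivalence `F^ι ≃ F^κ`. -/
noncomputable def conjFramedTuple (e : (ι → F) ≃ₗ[F] (κ → F)) :
    FramedTuple Λ F ι ≃ FramedTuple Λ F κ :=
  (Equiv.piCongrRight fun _ ↦ (conjMatrix e).toEquiv).prodCongr e.toEquiv

theorem generatedSubspace_conjFramedTuple (e : (ι → F) ≃ₗ[F] (κ → F)) (r : FramedTuple Λ F ι) :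
    generatedSubspace (conjFramedTuple e r) = (generatedSubspace r).map e.toLinearMap :=
  generatedSubspace_eq_map e.toLinearMap rfl fun _ _ ↦ conjMatrix_mulVec e _ _

open Classical in
theorem sum_generatedSubspace_eq_map [Fintype F] [Fintype Λ] [DecidableEq Λ] {M : Type*}
    [AddCommMonoid M] (W : FreeAlgebra F Λ) (φ : F → M) (e : (ι → F) ≃ₗ[F] (κ → F))
    (U : Submodule F (ι → F)) :
    ∑ r : FramedTuple Λ F κ with generatedSubspace r = U.map e.toLinearMap,
        φ (tracePotential W r.1) =
      ∑ r : FramedTuple Λ F ι with generatedSubspace r = U, φ (tracePotential W r.1) := by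
  symm
  refine Finset.sum_equiv (conjFramedTuple e) (fun r ↦ ?_) fun r _ ↦ ?_
  · have map_injective := Submodule.map_injective_of_injective e.injective
    simp [generatedSubspace_conjFramedTuple, map_injective.eq_iff]
  · exact congrArg φ (tracePotential_conjMatrix W e r.1).symm

end ChangeOfCoordinates

section BlockTriangular

variable {Λ F ι κ : Type*} [CommRing F]

variable (F ι κ) in
/-- The inclusion `F^ι → F^(ι ⊕ κ)` of the first block of coordinates. -/
def firstBlock : (ι → F) →ₗ[F] (ι ⊕ κ → F) :=
  (LinearEquiv.sumArrowLequivProdArrow ι κ F F).symm.toLinearMap ∘ₗ LinearMap.inl F _ _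

theorem firstBlock_apply (v : ι → F) : firstBlock F ι κ v = Sum.elim v 0 := by
  ext (i | k) <;> simp [firstBlock]

theorem firstBlock_injective : Function.Injective (firstBlock F ι κ) :=
  (LinearEquiv.sumArrowLequivProdArrow ι κ F F).symm.injective.comp LinearMap.inl_injective

theorem apply_inr_of_mem_range_firstBlock {v : ι ⊕ κ → F}
    (hv : v ∈ LinearMap.range (firstBlock F ι κ)) (k : κ) : v (Sum.inr k) = 0 := by
  obtain ⟨u, rfl⟩ := hv
  simp [firstBlock_apply]

/-- The framed tuple with block upper triangular loops, diagonal blocks `s` and `t` and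
off-diagonal block `u`, framed in the first block. -/
def blockTuple (s : FramedTuple Λ F ι) (t : Λ → Matrix κ κ F) (u : Λ → Matrix ι κ F) :
    FramedTuple Λ F (ι ⊕ κ) :=
  (fun l ↦ Matrix.fromBlocks (s.1 l) (u l) 0 (t l), firstBlock F ι κ s.2)

theorem blockTuple_injective : Function.Injective
    fun x : FramedTuple Λ F ι × (Λ → Matrix κ κ F) × (Λ → Matrix ι κ F) ↦
      blockTuple x.1 x.2.1 x.2.2 := by
  rintro ⟨⟨A, m⟩, t, u⟩ ⟨⟨A', m'⟩, t', u'⟩ h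
  simp only [blockTuple, Prod.mk.injEq, funext_iff, Matrix.fromBlocks_inj,
    firstBlock_injective.eq_iff] at h ⊢
  grind

variable [Fintype ι] [Fintype κ]

theorem eq_fromBlocks_of_invariant {X : Matrix (ι ⊕ κ) (ι ⊕ κ) F}
    (hX : ∀ v ∈ LinearMap.range (firstBlock F ι κ),
      X *ᵥ v ∈ LinearMap.range (firstBlock F ι κ)) :
    X = Matrix.fromBlocks X.toBlocks₁₁ X.toBlocks₁₂ 0 X.toBlocks₂₂ := by
  classical
  have lower_left_eq_zero : X.toBlocks₂₁ = 0 := by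
    ext k i
    have firstBlock_single : firstBlock F ι κ (Pi.single i 1) = Pi.single (Sum.inl i) 1 := by
      simp [firstBlock_apply]
    have := apply_inr_of_mem_range_firstBlock (hX _ ⟨Pi.single i 1, rfl⟩) k
    simpa [firstBlock_single, Matrix.toBlocks₂₁] using this
  rw [← lower_left_eq_zero, Matrix.fromBlocks_toBlocks]

theorem generatedSubspace_blockTuple (s : FramedTuple Λ F ι) (t : Λ → Matrix κ κ F)
    (u : Λ → Matrix ι κ F) :
    generatedSubspace (blockTuple s t u) = (generatedSubspace s).map (firstBlock F ι κ) := by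
  refine generatedSubspace_eq_map _ rfl fun l v ↦ ?_
  simp [blockTuple, firstBlock_apply, Matrix.fromBlocks_mulVec]

theorem generatedSubspace_blockTuple_eq_range_iff (s : FramedTuple Λ F ι)
    (t : Λ → Matrix κ κ F) (u : Λ → Matrix ι κ F) :
    generatedSubspace (blockTuple s t u) = LinearMap.range (firstBlock F ι κ) ↔
      generatedSubspace s = ⊤ := by
  rw [generatedSubspace_blockTuple, ← Submodule.map_top]
  exact (Submodule.map_injective_of_injective firstBlock_injective).eq_iff

theorem exists_blockTuple_eq {r : FramedTuple Λ F (ι ⊕ κ)}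
    (hr : generatedSubspace r = LinearMap.range (firstBlock F ι κ)) :
    ∃ s t u, blockTuple s t u = r := by
  obtain ⟨m, hm⟩ : r.2 ∈ LinearMap.range (firstBlock F ι κ) :=
    hr ▸ framing_mem_generatedSubspace r
  have invariant (l : Λ) : ∀ v ∈ LinearMap.range (firstBlock F ι κ),
      r.1 l *ᵥ v ∈ LinearMap.range (firstBlock F ι κ) := fun v hv ↦
    hr ▸ mulVec_mem_generatedSubspace r l (hr ▸ hv)
  exact ⟨(fun l ↦ (r.1 l).toBlocks₁₁, m), fun l ↦ (r.1 l).toBlocks₂₂,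
    fun l ↦ (r.1 l).toBlocks₁₂,
    Prod.ext (funext fun l ↦ (eq_fromBlocks_of_invariant (invariant l)).symm) hm⟩

variable [DecidableEq ι] [DecidableEq κ] [Fintype F] [Fintype Λ] [DecidableEq Λ] {R : Type*}
  [CommSemiring R]

variable (ι κ) in
open Classical in
/-- The total weight of the pairs of a stable framed tuple on `F^ι` and an unframed tuple on `F^κ`,
a pair being weighted by `φ` at the potential of its direct sum. -/
noncomputable def stablePairSum (W : FreeAlgebra F Λ) (φ : F → R) : R :=
  ∑ s : FramedTuple Λ F ι with generatedSubspace s = ⊤,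
    ∑ t : Λ → Matrix κ κ F, φ (tracePotential W s.1 + tracePotential W t)

open Classical in
theorem sum_generatedSubspace_eq_range_firstBlock (W : FreeAlgebra F Λ) (φ : F → R) :
    ∑ r : FramedTuple Λ F (ι ⊕ κ) with
        generatedSubspace r = LinearMap.range (firstBlock F ι κ), φ (tracePotential W r.1) =
      (Fintype.card F : R) ^ (Fintype.card Λ * Fintype.card ι * Fintype.card κ) *
        stablePairSum ι κ W φ := by
  have sum_blocks : ∑ x ∈ Finset.filter (fun s : FramedTuple Λ F ι ↦ generatedSubspace s = ⊤) .univ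
        ×ˢ (.univ : Finset ((Λ → Matrix κ κ F) × (Λ → Matrix ι κ F))),
        φ (tracePotential W x.1.1 + tracePotential W x.2.1) =
      ∑ r : FramedTuple Λ F (ι ⊕ κ) with
        generatedSubspace r = LinearMap.range (firstBlock F ι κ), φ (tracePotential W r.1) := by
    refine Finset.sum_nbij (fun x ↦ blockTuple x.1 x.2.1 x.2.2) (fun x hx ↦ ?_)
      blockTuple_injective.injOn (fun r hr ↦ ?_) fun x _ ↦ ?_
    · simpa [generatedSubspace_blockTuple_eq_range_iff] using hx
    · have hr : generatedSubspace r = LinearMap.range (firstBlock F ι κ) := by simpa using hr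
      obtain ⟨s, t, u, rfl⟩ := exists_blockTuple_eq hr
      have hs := (generatedSubspace_blockTuple_eq_range_iff s t u).1 hr
      exact ⟨(s, t, u), by simpa using hs, rfl⟩
    · exact congrArg φ (tracePotential_fromBlocks W x.1.1 x.2.2 x.2.1).symm
  rw [← sum_blocks, Finset.sum_product, stablePairSum, Finset.mul_sum]
  refine Finset.sum_congr rfl fun s _ ↦ ?_
  rw [Fintype.sum_prod_type_right]
  simp [card_matrix, ← pow_mul, mul_comm, mul_left_comm]

end BlockTriangular

section Stratification

theorem exists_linearEquiv_map_range_firstBlock {F ι κ V : Type*} [Field F] [Fintype ι]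
    [Fintype κ] [AddCommGroup V] [Module F V] [FiniteDimensional F V] (U : Submodule F V)
    (hι : Module.finrank F U = Fintype.card ι)
    (hV : Module.finrank F V = Fintype.card ι + Fintype.card κ) :
    ∃ e : (ι ⊕ κ → F) ≃ₗ[F] V,
      (LinearMap.range (firstBlock F ι κ)).map e.toLinearMap = U := by
  obtain ⟨C, hUC⟩ := Submodule.exists_isCompl U
  have hκ : Module.finrank F C = Fintype.card κ := by
    have := Submodule.finrank_add_eq_of_isCompl hUC
    omega
  let eU : (ι → F) ≃ₗ[F] U := LinearEquiv.ofFinrankEq _ _ (by simp [hι])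
  let eC : (κ → F) ≃ₗ[F] C := LinearEquiv.ofFinrankEq _ _ (by simp [hκ])
  let e : (ι ⊕ κ → F) ≃ₗ[F] V := (LinearEquiv.sumArrowLequivProdArrow ι κ F F).trans
    ((eU.prodCongr eC).trans (Submodule.prodEquivOfIsCompl U C hUC))
  have e_comp_firstBlock : e.toLinearMap ∘ₗ firstBlock F ι κ = U.subtype ∘ₗ eU.toLinearMap := by
    ext1 v
    simp [e, firstBlock]
  refine ⟨e, ?_⟩
  rw [← LinearMap.range_comp, e_comp_firstBlock, LinearEquiv.range_comp, Submodule.range_subtype]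

variable {Λ F R : Type*} [Fintype Λ] [DecidableEq Λ] [Field F] [Fintype F] [CommSemiring R]

open Classical in
theorem sum_generatedSubspace_eq {n w : ℕ} (W : FreeAlgebra F Λ) (φ : F → R)
    {U : Submodule F (Fin n → F)} (hU : Module.finrank F U = w) :
    ∑ r : FramedTuple Λ F (Fin n) with generatedSubspace r = U, φ (tracePotential W r.1) =
      (Fintype.card F : R) ^ (Fintype.card Λ * w * (n - w)) *
        stablePairSum (Fin w) (Fin (n - w)) W φ := by
  have hwn : w ≤ n := by simpa [hU] using Submodule.finrank_le U
  obtain ⟨e, rfl⟩ := exists_linearEquiv_map_range_firstBlock (ι := Fin w) (κ := Fin (n - w)) U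
    (by simpa using hU) (by simp [hwn])
  rw [sum_generatedSubspace_eq_map, sum_generatedSubspace_eq_range_firstBlock]
  simp only [Fintype.card_fin]

theorem sum_comp_finrank_eq_sum_grassCount (n : ℕ) [Fintype (Submodule F (Fin n → F))]
    (g : ℕ → R) :
    ∑ U : Submodule F (Fin n → F), g (Module.finrank F U) =
      ∑ w ∈ Finset.range (n + 1), (grassCount F w n : R) * g w := by
  classical
  have finrank_mem_range (U : Submodule F (Fin n → F)) :
      Module.finrank F U ∈ Finset.range (n + 1) := by
    simpa [Nat.lt_succ_iff] using Submodule.finrank_le U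
  rw [← Finset.sum_fiberwise_of_maps_to' fun U _ ↦ finrank_mem_range U]
  simp [grassCount, Fintype.card_subtype]

theorem sum_framedTuple_eq_sum_grassCount (n : ℕ) (W : FreeAlgebra F Λ) (φ : F → R) :
    ∑ r : FramedTuple Λ F (Fin n), φ (tracePotential W r.1) =
      ∑ w ∈ Finset.range (n + 1), (grassCount F w n : R) *
        ((Fintype.card F : R) ^ (Fintype.card Λ * w * (n - w)) *
          stablePairSum (Fin w) (Fin (n - w)) W φ) := by
  classical
  have : Fintype (Submodule F (Fin n → F)) := Fintype.ofFinite _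
  rw [← Finset.sum_fiberwise (κ := Submodule F (Fin n → F)) .univ generatedSubspace]
  simp only [sum_generatedSubspace_eq W φ rfl]
  exact sum_comp_finrank_eq_sum_grassCount n fun w ↦
    (Fintype.card F : R) ^ (Fintype.card Λ * w * (n - w)) *
      stablePairSum (Fin w) (Fin (n - w)) W φ

end Stratification

section CutPotential

variable {F : Type*} [CommRing F] {d : ℕ}

/-- The potential `x · P` in the loops `Fin (d + 1)`, where `x` is the loop `0` and `P` is a
noncommutative polynomial in the remaining loops, renumbered by `Fin d`. -/
noncomputable def cutPotential (P : FreeAlgebra F (Fin d)) : FreeAlgebra F (Fin (d + 1)) :=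
  FreeAlgebra.ι F 0 * FreeAlgebra.lift F (fun l ↦ FreeAlgebra.ι F l.succ) P

theorem tracePotential_cutPotential {ι : Type*} [Fintype ι] [DecidableEq ι]
    (P : FreeAlgebra F (Fin d)) (A : Fin (d + 1) → Matrix ι ι F) :
    tracePotential (cutPotential P) A = (A 0 * FreeAlgebra.lift F (Fin.tail A) P).trace := by
  have lift_succ : (FreeAlgebra.lift F A).comp
      (FreeAlgebra.lift F fun l ↦ FreeAlgebra.ι F l.succ) = FreeAlgebra.lift F (Fin.tail A) := by
    ext l : 2
    simp [Fin.tail]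
  rw [tracePotential, cutPotential, map_mul, FreeAlgebra.lift_ι_apply, ← lift_succ,
    AlgHom.comp_apply]

/-- The number of solutions of `P = 0` in `n × n` matrices over `F`, where `P` is a noncommutative
polynomial; it is `0` if there are infinitely many. -/
noncomputable def solutionCount {Λ : Type*} (P : FreeAlgebra F Λ) (n : ℕ) : ℕ :=
  Nat.card {A : Λ → Matrix (Fin n) (Fin n) F // FreeAlgebra.lift F A P = 0}

/-- The number of stable framed tuples on `F^w` at which the trace of the potential `W` is `c`; it
is `0` if there are infinitely many. -/
noncomputable def stableCount {Λ : Type*} (W : FreeAlgebra F Λ) (w : ℕ) (c : F) : ℕ :=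
  Nat.card {r : FramedTuple Λ F (Fin w) // generatedSubspace r = ⊤ ∧ tracePotential W r.1 = c}

end CutPotential

section Reduction

variable {F : Type*} [Field F] [Fintype F] {d : ℕ}

theorem sum_comp_add_tracePotential_cutPotential {R : Type*} [CommSemiring R] {φ : F → R}
    (hφ : ∑ c, φ c = 0) (P : FreeAlgebra F (Fin d)) (k : ℕ) (a : F) :
    ∑ A : Fin (d + 1) → Matrix (Fin k) (Fin k) F, φ (a + tracePotential (cutPotential P) A) =
      (Fintype.card F : R) ^ k ^ 2 * solutionCount P k * φ a := by
  classical
  rw [← (Fin.consEquiv fun _ ↦ Matrix (Fin k) (Fin k) F).sum_comp, Fintype.sum_prod_type_right]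
  simp only [Fin.consEquiv, Equiv.coe_fn_mk, tracePotential_cutPotential, Fin.cons_zero,
    Fin.tail_cons, sum_comp_add_trace_mul hφ, Fintype.card_fin]
  rw [← Finset.sum_filter, Finset.sum_const, solutionCount, Nat.card_eq_fintype_card,
    Fintype.card_subtype, nsmul_eq_mul]
  ring

theorem sum_framedTuple_cutPotential {R : Type*} [CommSemiring R] {φ : F → R} (hφ : ∑ c, φ c = 0)
    (P : FreeAlgebra F (Fin d)) (n : ℕ) :
    ∑ r : FramedTuple (Fin (d + 1)) F (Fin n), φ (tracePotential (cutPotential P) r.1) =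
      (Fintype.card F : R) ^ (n ^ 2 + n) * solutionCount P n * φ 0 := by
  have sum_loops := sum_comp_add_tracePotential_cutPotential hφ P n 0
  simp only [zero_add] at sum_loops
  rw [Fintype.sum_prod_type_right]
  simp only [sum_loops, Finset.sum_const, Finset.card_univ, Fintype.card_fun, Fintype.card_fin,
    nsmul_eq_mul, Nat.cast_pow]
  ring

open Classical in
theorem stablePairSum_cutPotential {ι R : Type*} [Fintype ι] [DecidableEq ι] [CommSemiring R]
    {φ : F → R} (hφ : ∑ c, φ c = 0) (P : FreeAlgebra F (Fin d)) (k : ℕ) :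
    stablePairSum ι (Fin k) (cutPotential P) φ =
      (Fintype.card F : R) ^ k ^ 2 * solutionCount P k *
        ∑ s : FramedTuple (Fin (d + 1)) F ι with generatedSubspace s = ⊤,
          φ (tracePotential (cutPotential P) s.1) := by
  simp only [stablePairSum, sum_comp_add_tracePotential_cutPotential hφ, Finset.mul_sum]

open Classical in
theorem sum_stable_single_sub_single {Λ : Type*} [Fintype Λ] [DecidableEq Λ]
    (W : FreeAlgebra F Λ) (w : ℕ) (a b : F) :
    ∑ s : FramedTuple Λ F (Fin w) with generatedSubspace s = ⊤,
        (Pi.single a 1 - Pi.single b 1 : F → ℤ) (tracePotential W s.1) =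
      (stableCount W w a : ℤ) - stableCount W w b := by
  simp [Pi.single_apply, Finset.filter_filter, stableCount, Fintype.card_subtype]

theorem reduction_theorem_pointcount_general (P : FreeAlgebra F (Fin d)) (n : ℕ) :
    (Fintype.card F : ℤ) ^ (n ^ 2 + n) * solutionCount P n =
      ∑ w ∈ Finset.range (n + 1),
        (grassCount F w n : ℤ)
          * (Fintype.card F : ℤ) ^ ((d + 1) * w * (n - w) + (n - w) ^ 2)
          * ((stableCount (cutPotential P) w 0 : ℤ) - stableCount (cutPotential P) w 1)
          * solutionCount P (n - w) := by
  classical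
  let φ : F → ℤ := Pi.single 0 1 - Pi.single 1 1
  have hφ : ∑ c, φ c = 0 := by simp [φ]
  have hφ0 : φ 0 = 1 := by simp [φ]
  calc (Fintype.card F : ℤ) ^ (n ^ 2 + n) * solutionCount P n
    _ = ∑ r : FramedTuple (Fin (d + 1)) F (Fin n), φ (tracePotential (cutPotential P) r.1) := by
      rw [sum_framedTuple_cutPotential hφ, hφ0, mul_one]
    _ = _ := by
      rw [sum_framedTuple_eq_sum_grassCount]
      refine Finset.sum_congr rfl fun w _ ↦ ?_
      rw [stablePairSum_cutPotential hφ, sum_stable_single_sub_single, Fintype.card_fin]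
      ring

end Reduction

section ChernSimons

/-- The relation `yz - zy`, whose `cutPotential` is the superpotential `x(yz - zy)`. -/
noncomputable def commutatorRelation (F : Type*) [CommRing F] : FreeAlgebra F (Fin 2) :=
  FreeAlgebra.ι F 0 * FreeAlgebra.ι F 1 - FreeAlgebra.ι F 1 * FreeAlgebra.ι F 0

/-- Framed tuples for three loops, as the nested products of `stableFibreCount`. -/
def framedTripleEquiv (F ι : Type*) :
    Matrix ι ι F × Matrix ι ι F × Matrix ι ι F × (ι → F) ≃ FramedTuple (Fin 3) F ι where
  toFun p := (![p.1, p.2.1, p.2.2.1], p.2.2.2)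
  invFun r := (r.1 0, r.1 1, r.1 2, r.2)
  right_inv r := Prod.ext (funext fun l ↦ by fin_cases l <;> rfl) rfl

theorem framedTripleEquiv_apply {F ι : Type*} (X Y Z : Matrix ι ι F) (m : ι → F) :
    framedTripleEquiv F ι (X, Y, Z, m) = (![X, Y, Z], m) :=
  rfl

theorem tracePotential_cutPotential_commutatorRelation {F ι : Type*} [CommRing F] [Fintype ι]
    [DecidableEq ι] (X Y Z : Matrix ι ι F) :
    tracePotential (cutPotential (commutatorRelation F)) ![X, Y, Z] =
      (X * (Y * Z - Z * Y)).trace := by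
  simp [tracePotential_cutPotential, commutatorRelation]

variable {F : Type*} [Field F]

theorem generatedSubspace_vec_eq_genSpan {n : ℕ} (X Y Z : Matrix (Fin n) (Fin n) F)
    (m : Fin n → F) :
    generatedSubspace (![X, Y, Z], m) = genSpan X Y Z m := by
  simp [generatedSubspace, genSpan, Fin.forall_fin_succ]

variable [Fintype F]

theorem solutionCount_commutatorRelation (n : ℕ) :
    solutionCount (commutatorRelation F) n = commCount F n :=
  Nat.card_congr <| (finTwoArrowEquiv _).subtypeEquiv fun A ↦ by
    simp [commutatorRelation, sub_eq_zero]

theorem stableCount_commutatorRelation (w : ℕ) (c : F) :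
    stableCount (cutPotential (commutatorRelation F)) w c = stableFibreCount F w c := by
  symm
  refine Nat.card_congr <| (framedTripleEquiv F (Fin w)).subtypeEquiv fun ⟨X, Y, Z, m⟩ ↦ ?_
  rw [framedTripleEquiv_apply, generatedSubspace_vec_eq_genSpan,
    tracePotential_cutPotential_commutatorRelation]

end ChernSimons

/-- Point-count instance of the reduction theorem
`R(𝕃^{f/2} t) = DT_f(t) ∗ R(𝕃^{-f/2} t)` for the three-loop quiver with
superpotential `W = x(yz - zy)` and framing `f = 1`:
`q^(n²+n)·C(n) = Σ_{w=0}^{n} G(w,n)·q^(3w(n-w)+(n-w)²)·(y₀(w) - y₁(w))·C(n-w)`. -/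
theorem reduction_theorem_pointcount {F : Type*} [Field F] [Fintype F] (n : ℕ) :
    ((Fintype.card F : ℤ) ^ (n ^ 2 + n) * commCount F n)
      = ∑ w ∈ Finset.range (n + 1),
          (grassCount F w n : ℤ)
            * (Fintype.card F : ℤ) ^ (3 * w * (n - w) + (n - w) ^ 2)
            * ((stableFibreCount F w 0 : ℤ) - stableFibreCount F w 1)
            * commCount F (n - w) := by
  simpa only [solutionCount_commutatorRelation, stableCount_commutatorRelation] using
    reduction_theorem_pointcount_general (commutatorRelation F) n
end
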